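/- arXiv:2105.07449 — 3 statements merged into one kernel-verified Lean document; each statement's English description precedes it below -/
import Mathlib

section
/- Let f_1,…,f_k ∈ ℂ[x_1,…,x_n], let u ∈ ℂ^n, set f̂_j := x_1⋯x_n·f_j and F̂ := (f̂_1,…,f̂_k). Then the map φ defined by φ(x_1,…,x_n,λ_1,…,λ_k) = (x_1,…,x_n, λ_1/(x_1⋯x_n),…,λ_k/(x_1⋯x_n)) is a well-defined bijection from V(L(F)) ∩ (ℂ*)^{n+k} onto V(L(F̂)) ∩ (ℂ*)^{n+k}, with inverse (x,λ) ↦ (x, x_1⋯x_n·λ_1,…,x_1⋯x_n·λ_k). -/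
/-!
On the variety of `f`, the product rule gives
`∂(x_1⋯x_n · f_j)/∂x_i = x_1⋯x_n · ∂f_j/∂x_i`, because the other term carries the factor `f_j`.
On the torus `x_1⋯x_n` is nonzero, so `f_j` and `x_1⋯x_n · f_j` have the same zeros there, and the
factor `x_1⋯x_n` can be absorbed into the multipliers `λ_j`. Hence `(x, λ)` solves the system for
`x_1⋯x_n · f` exactly when `(x, x_1⋯x_n · λ)` solves the one for `f` (`mem_mlSol_prod_mul_iff`).
-/

open MvPolynomial

/-- The polynomial `ℓ_i = u_i - x_i · Σ_j λ_j ∂f_j/∂x_i` of the ML system,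
as an element of `ℂ[x_1,…,x_n,λ_1,…,λ_k]` (variables indexed by `Fin n ⊕ Fin k`). -/
noncomputable def mlEll (n k : ℕ) (f : Fin k → MvPolynomial (Fin n) ℂ)
    (u : Fin n → ℂ) (i : Fin n) : MvPolynomial (Fin n ⊕ Fin k) ℂ :=
  C (u i) - X (Sum.inl i) *
    ∑ j : Fin k, X (Sum.inr j) * rename Sum.inl (pderiv i (f j))

/-- The solution set of the ML system `L(F)` in `ℂ^n × ℂ^k`. -/
def mlSol (n k : ℕ) (f : Fin k → MvPolynomial (Fin n) ℂ) (u : Fin n → ℂ) :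
    Set ((Fin n → ℂ) × (Fin k → ℂ)) :=
  {p | (∀ i, eval (Sum.elim p.1 p.2) (mlEll n k f u i) = 0) ∧
       (∀ j, eval p.1 (f j) = 0)}

/-- The Newton polytope of a multivariate polynomial. -/
noncomputable def newt {σ : Type*} (f : MvPolynomial σ ℂ) : Set (σ → ℝ) :=
  convexHull ℝ ((fun d : σ →₀ ℕ => fun i => ((d i : ℕ) : ℝ)) '' ↑f.support)

/-- `⟨w, x⟩` for an integer weight vector `w`. -/
def wdot {σ : Type*} [Fintype σ] (w : σ → ℤ) (x : σ → ℝ) : ℝ :=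
  ∑ i, (w i : ℝ) * x i

/-- The face of `P` exposed by `w`. -/
def faceOf {σ : Type*} [Fintype σ] (w : σ → ℤ) (P : Set (σ → ℝ)) : Set (σ → ℝ) :=
  {x ∈ P | ∀ y ∈ P, wdot w x ≤ wdot w y}

/-- `val_w(P) = min_{x ∈ P} ⟨w,x⟩`. -/
noncomputable def valOf {σ : Type*} [Fintype σ] (w : σ → ℤ) (P : Set (σ → ℝ)) : ℝ :=
  sInf (wdot w '' P)

/-- The initial polynomial `init_w(f)`: the sum of the terms of `f` whose
exponent vectors minimize `⟨w,·⟩` over the support of `f`. -/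
noncomputable def initw {σ : Type*} [Fintype σ] (w : σ → ℤ) (f : MvPolynomial σ ℂ) :
    MvPolynomial σ ℂ :=
  ∑ d ∈ f.support.filter
      (fun d => ∀ d' ∈ f.support, ∑ i, w i * (d i : ℤ) ≤ ∑ i, w i * (d' i : ℤ)),
    monomial d (coeff d f)

/-- The sparse polynomial with support `A` and coefficients `c`. -/
noncomputable def sparsePoly (n : ℕ) (A : Finset (Fin n →₀ ℕ)) (c : (Fin n →₀ ℕ) → ℂ) :
    MvPolynomial (Fin n) ℂ :=
  ∑ α ∈ A, monomial α (c α)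

theorem mem_mlSol_iff (n k : ℕ) (f : Fin k → MvPolynomial (Fin n) ℂ) (u : Fin n → ℂ)
    (x : Fin n → ℂ) (l : Fin k → ℂ) :
    (x, l) ∈ mlSol n k f u ↔
      (∀ i, u i - x i * ∑ j, l j * eval x (pderiv i (f j)) = 0) ∧ ∀ j, eval x (f j) = 0 := by
  simp [mlSol, mlEll, eval_rename, Function.comp_def]

/-- Product rule step: modulo the equations `f_j(x) = 0`, multiplying every `f_j` by `x_1⋯x_n` only
rescales the multipliers. -/
theorem mem_mlSol_prod_mul_iff (n k : ℕ) (f : Fin k → MvPolynomial (Fin n) ℂ) (u : Fin n → ℂ)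
    (x : Fin n → ℂ) (l : Fin k → ℂ) (hx : ∏ i, x i ≠ 0) :
    (x, l) ∈ mlSol n k (fun j => (∏ i : Fin n, X i) * f j) u ↔
      (x, fun j => (∏ i, x i) * l j) ∈ mlSol n k f u := by
  have hev : eval x (∏ i : Fin n, (X i : MvPolynomial (Fin n) ℂ)) = ∏ i, x i := by
    simp
  have hz : (∀ j, eval x ((∏ i : Fin n, X i) * f j) = 0) ↔ ∀ j, eval x (f j) = 0 := by
    simp only [map_mul, hev, mul_eq_zero, hx, false_or]
  rw [mem_mlSol_iff, mem_mlSol_iff, hz]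
  refine and_congr_left fun hf => forall_congr' fun i => ?_
  have hs : ∑ j, l j * eval x (pderiv i ((∏ i : Fin n, X i) * f j)) =
      ∑ j, (∏ i, x i) * l j * eval x (pderiv i (f j)) := by
    refine Finset.sum_congr rfl fun j _ => ?_
    rw [Derivation.leibniz]
    simp only [smul_eq_mul, map_add, map_mul, hev, hf j]
    ring
  rw [hs]

/-- with `f̂_j = x_1⋯x_n · f_j`, the map
`φ(x,λ) = (x, λ_1/(x_1⋯x_n), …, λ_k/(x_1⋯x_n))` is a bijection from the torus
solutions of `L(F)` onto the torus solutions of `L(F̂)`, with inverse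
`(x,λ) ↦ (x, x_1⋯x_n·λ_1, …, x_1⋯x_n·λ_k)`. -/
theorem statement4 (n k : ℕ) (f : Fin k → MvPolynomial (Fin n) ℂ) (u : Fin n → ℂ) :
    let fhat : Fin k → MvPolynomial (Fin n) ℂ := fun j => (∏ i : Fin n, X i) * f j
    let T : Set ((Fin n → ℂ) × (Fin k → ℂ)) :=
      {p ∈ mlSol n k f u | (∀ i, p.1 i ≠ 0) ∧ ∀ j, p.2 j ≠ 0}
    let That : Set ((Fin n → ℂ) × (Fin k → ℂ)) :=
      {p ∈ mlSol n k fhat u | (∀ i, p.1 i ≠ 0) ∧ ∀ j, p.2 j ≠ 0}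
    let φ : ((Fin n → ℂ) × (Fin k → ℂ)) → ((Fin n → ℂ) × (Fin k → ℂ)) :=
      fun p => (p.1, fun j => p.2 j / ∏ i, p.1 i)
    let ψ : ((Fin n → ℂ) × (Fin k → ℂ)) → ((Fin n → ℂ) × (Fin k → ℂ)) :=
      fun p => (p.1, fun j => (∏ i, p.1 i) * p.2 j)
    Set.BijOn φ T That ∧ Set.InvOn ψ φ T That := by
  intro fhat T That φ ψ
  have hprod : ∀ x : Fin n → ℂ, (∀ i, x i ≠ 0) → ∏ i, x i ≠ 0 := fun x hx =>
    Finset.prod_ne_zero_iff.2 fun i _ => hx i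
  have hinv : Set.InvOn ψ φ T That := by
    constructor
    · rintro ⟨x, l⟩ ⟨-, hx, -⟩
      have h := hprod x hx
      exact Prod.ext rfl (funext fun j => mul_div_cancel₀ (l j) h)
    · rintro ⟨x, l⟩ ⟨-, hx, -⟩
      have h := hprod x hx
      exact Prod.ext rfl (funext fun j => mul_div_cancel_left₀ (l j) h)
  have hψ : Set.MapsTo ψ That T := by
    rintro ⟨x, l⟩ ⟨hs, hx, hl⟩
    have h := hprod x hx
    exact ⟨(mem_mlSol_prod_mul_iff n k f u x l h).1 hs, hx, fun j => mul_ne_zero h (hl j)⟩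
  have hφ : Set.MapsTo φ T That := by
    intro p hp
    have hψφ : ψ (φ p) = p := hinv.1 hp
    obtain ⟨hs, hx, hl⟩ := hp
    have h := hprod p.1 hx
    refine ⟨(mem_mlSol_prod_mul_iff n k f u p.1 (φ p).2 h).2 ?_, hx, fun j => div_ne_zero (hl j) h⟩
    change ψ (φ p) ∈ mlSol n k f u
    rwa [hψφ]
  exact ⟨hinv.bijOn hφ hψ, hinv⟩
end

section
/- Fix positive integers n, k and finite nonempty supports A_1,…,A_k ⊆ ℕ^n. There exists a nonzero polynomial G in the coefficients c = (c_{j,α}) and the data u = (u_1,…,u_n) such that whenever G(c,u) ≠ 0, the ML system L(F) of F = (f_1,…,f_k), f_j = Σ_{α∈A_j} c_{j,α} x^α, and the ML system L(F̂) of F̂ = (f̂_1,…,f̂_k), f̂_j := x_1⋯x_n·f_j, both with data u, have the same finite number of solutions in ℂ^{n+k}. (That is, the ML degree of F equals the ML degree of F̂.) -/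
/-! If all `u_i ≠ 0`, every solution of either ML system lies in the torus, where rescaling the
multipliers by `(x_1⋯x_n)⁻¹` is a bijection between the two solution sets (`mlSol_hat`). It remains
to see that the solution set is finite for generic `(c, u)`.

The incidence variety of all `(x, λ, c, u)` is parametrized by a localized affine space of the
same dimension as the space of parameters `(c, u)`: on the torus each equation `f_j(x) = 0` can be
solved for one coefficient of `f_j`, and `u` is then determined (`exists_generic_finite`). By
transcendence degree, each coordinate `x_i` or `λ_j` is therefore algebraically dependent on the
coordinate functions of the projection to `(c, u)` (`exists_relation`). Where the leading
coefficient of such a relation does not vanish, that coordinate takes finitely many values on the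
fibre (`generic_finite`). This covers dominant and non-dominant projections alike. -/

open MvPolynomial

/-! ### Generic finiteness of the fibres of a map -/

/-- A localization of a polynomial ring in finitely many variables at a nonzero element has
transcendence degree the number of variables, so one more element than there are variables
is always algebraically dependent. -/
lemma exists_relation {τ : Type} [Fintype τ] (m : MvPolynomial τ ℂ) (hm : m ≠ 0)
    (Φ : τ → Localization.Away m) (y : Localization.Away m) :
    ∃ P : MvPolynomial (Option τ) ℂ, P ≠ 0 ∧ aeval (fun o : Option τ => o.elim y Φ) P = 0 := by
  have hle : Submonoid.powers m ≤ nonZeroDivisors (MvPolynomial τ ℂ) :=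
    powers_le_nonZeroDivisors_of_noZeroDivisors hm
  have : IsDomain (Localization.Away m) := IsLocalization.isDomain_localization hle
  have : FaithfulSMul (MvPolynomial τ ℂ) (Localization.Away m) :=
    (faithfulSMul_iff_algebraMap_injective _ _).2 (IsLocalization.injective _ hle)
  have : Algebra.IsAlgebraic (MvPolynomial τ ℂ) (Localization.Away m) :=
    IsLocalization.isAlgebraic _ (Submonoid.powers m)
  have htr : Algebra.trdeg ℂ (Localization.Away m) = Fintype.card τ := by
    rw [← trdeg_add_eq ℂ (MvPolynomial τ ℂ) (A := Localization.Away m),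
      trdeg_eq_zero (R := MvPolynomial τ ℂ), MvPolynomial.trdeg_of_isDomain]
    simp
  have hdep : ¬ AlgebraicIndependent ℂ (fun o : Option τ => o.elim y Φ) := by
    intro h
    have h1 := h.cardinalMk_le_trdeg
    rw [htr, Cardinal.mk_fintype, Fintype.card_option] at h1
    norm_cast at h1
    omega
  rw [algebraicIndependent_iff] at hdep
  push Not at hdep
  obtain ⟨P, h0, hP⟩ := hdep
  exact ⟨P, hP, h0⟩

/-- Regard the `ℂ`-points `e` of the localization as points of a variety of dimension `|τ|`, and
`Φ` as a map from it to `ℂ^τ`. A coordinate `y` takes finitely many values on a generic fibre of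
`Φ`: the values are roots of the specialized relation between `Φ` and `y`, and `G` is the
leading coefficient of that relation. -/
lemma generic_finite_one {τ : Type} [Fintype τ] (m : MvPolynomial τ ℂ) (hm : m ≠ 0)
    (Φ : τ → Localization.Away m) (y : Localization.Away m) :
    ∃ G : MvPolynomial τ ℂ, G ≠ 0 ∧ ∀ z : τ → ℂ, eval z G ≠ 0 →
      {w : ℂ | ∃ e : Localization.Away m →ₐ[ℂ] ℂ, (∀ t, e (Φ t) = z t) ∧ e y = w}.Finite := by
  obtain ⟨P, hP, h0⟩ := exists_relation m hm Φ y
  set Q := optionEquivLeft ℂ τ P with hQ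
  have hQ0 : Q ≠ 0 := by simpa [hQ] using hP
  refine ⟨Q.leadingCoeff, by simpa using hQ0, fun z hz => ?_⟩
  have hne : Q.map (eval z) ≠ 0 := by
    intro h
    apply hz
    have := congrArg (fun p => Polynomial.coeff p Q.natDegree) h
    simpa [Polynomial.coeff_map] using this
  refine (Polynomial.finite_setOfPred_isRoot hne).subset ?_
  rintro w ⟨e, he, rfl⟩
  have h1 : e (aeval (fun o : Option τ => o.elim y Φ) P) = 0 := by rw [h0, map_zero]
  rw [← AlgHom.comp_apply, MvPolynomial.comp_aeval] at h1
  have h2 : (fun o : Option τ => e (o.elim y Φ)) = fun o => o.elim (e y) z := by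
    funext o
    cases o <;> simp [he]
  rw [Set.mem_ofPred_eq, Polynomial.IsRoot, hQ, ← optionEquivLeft_elim_eval]
  rw [h2] at h1
  simpa [MvPolynomial.aeval_eq_eval] using h1

lemma generic_finite {τ κ : Type} [Fintype τ] [Fintype κ] (m : MvPolynomial τ ℂ) (hm : m ≠ 0)
    (Φ : τ → Localization.Away m) (y : κ → Localization.Away m) :
    ∃ G : MvPolynomial τ ℂ, G ≠ 0 ∧ ∀ z : τ → ℂ, eval z G ≠ 0 →
      {w : κ → ℂ | ∃ e : Localization.Away m →ₐ[ℂ] ℂ,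
        (∀ t, e (Φ t) = z t) ∧ ∀ i, e (y i) = w i}.Finite := by
  choose G hG h using fun i => generic_finite_one m hm Φ (y i)
  refine ⟨∏ i, G i, Finset.prod_ne_zero_iff.2 fun i _ => hG i, fun z hz => ?_⟩
  rw [map_prod, Finset.prod_ne_zero_iff] at hz
  refine (Set.Finite.pi' fun i => h i z (hz i (Finset.mem_univ i))).subset ?_
  rintro w ⟨e, he, hw⟩ i
  exact ⟨e, he, hw i⟩

/-! ### The ML system -/

lemma mem_mlSol {n k : ℕ} {f : Fin k → MvPolynomial (Fin n) ℂ} {u : Fin n → ℂ}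
    {p : (Fin n → ℂ) × (Fin k → ℂ)} :
    p ∈ mlSol n k f u ↔
      (∀ i, u i = p.1 i * ∑ j, p.2 j * eval p.1 (pderiv i (f j))) ∧ ∀ j, eval p.1 (f j) = 0 := by
  have h : ∀ q : MvPolynomial (Fin n) ℂ,
      eval (Sum.elim p.1 p.2) (rename Sum.inl q : MvPolynomial (Fin n ⊕ Fin k) ℂ)
        = eval p.1 q := fun q => by
    rw [eval_rename]; rfl
  simp [mlSol, mlEll, h, sub_eq_zero]

lemma mlSol_ne_zero {n k : ℕ} {f : Fin k → MvPolynomial (Fin n) ℂ} {u : Fin n → ℂ}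
    (hu : ∀ i, u i ≠ 0) {p : (Fin n → ℂ) × (Fin k → ℂ)} (hp : p ∈ mlSol n k f u) (i : Fin n) :
    p.1 i ≠ 0 := by
  intro h
  have := (mem_mlSol.1 hp).1 i
  rw [h, zero_mul] at this
  exact hu i this

/-- On the torus, `f` and `g * f` with `g = x_1⋯x_n` have the same zeros, and there
`∂(g f)/∂x_i = g · ∂f/∂x_i`; so rescaling each multiplier by `g⁻¹` carries the first ML system to
the second. -/
lemma mlSol_hat {n k : ℕ} (f : Fin k → MvPolynomial (Fin n) ℂ) {u : Fin n → ℂ}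
    (hu : ∀ i, u i ≠ 0) :
    mlSol n k (fun j => (∏ i : Fin n, X i) * f j) u =
      (fun p => (p.1, fun j => p.2 j / ∏ i, p.1 i)) '' mlSol n k f u := by
  have key : ∀ (x : Fin n → ℂ) (l : Fin k → ℂ), (∀ j, eval x (f j) = 0) → ∀ i,
      ∑ j, l j * eval x (pderiv i ((∏ i : Fin n, X i) * f j))
        = ∑ j, (l j * ∏ i, x i) * eval x (pderiv i (f j)) := by
    intro x l h i
    refine Finset.sum_congr rfl fun j _ => ?_
    simp [Derivation.leibniz, h j, map_prod, mul_assoc]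
  ext ⟨x, l⟩
  constructor
  · intro hp
    have hx : ∀ i, x i ≠ 0 := mlSol_ne_zero hu hp
    have hg : ∏ i, x i ≠ 0 := Finset.prod_ne_zero_iff.2 fun i _ => hx i
    obtain ⟨h1, h2⟩ := mem_mlSol.1 hp
    have h3 : ∀ j, eval x (f j) = 0 := fun j => by
      have := h2 j
      simp only [map_mul, map_prod, eval_X] at this
      exact (mul_eq_zero.1 this).resolve_left hg
    refine ⟨(x, fun j => l j * ∏ i, x i), mem_mlSol.2 ⟨fun i => ?_, h3⟩, ?_⟩
    · exact (h1 i).trans (by rw [key x l h3])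
    · simp [hg]
  · rintro ⟨⟨x', l'⟩, hp, h⟩
    obtain ⟨rfl, rfl⟩ := Prod.mk.inj h
    have hx : ∀ i, x' i ≠ 0 := mlSol_ne_zero hu hp
    have hg : ∏ i, x' i ≠ 0 := Finset.prod_ne_zero_iff.2 fun i _ => hx i
    obtain ⟨h1, h2⟩ := mem_mlSol.1 hp
    refine mem_mlSol.2 ⟨fun i => ?_, fun j => ?_⟩
    · refine (h1 i).trans ?_
      simp only
      rw [key x' _ h2]
      simp [hg]
    · have := h2 j
      simp only at this
      simp [this]

lemma injOn_rescale {n k : ℕ} (f : Fin k → MvPolynomial (Fin n) ℂ) {u : Fin n → ℂ}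
    (hu : ∀ i, u i ≠ 0) :
    Set.InjOn (fun p : (Fin n → ℂ) × (Fin k → ℂ) => (p.1, fun j => p.2 j / ∏ i, p.1 i))
      (mlSol n k f u) := by
  rintro ⟨x, l⟩ hp ⟨x', l'⟩ - h
  obtain ⟨rfl, h2⟩ := Prod.mk.inj h
  have hg : ∏ i, x i ≠ 0 := Finset.prod_ne_zero_iff.2 fun i _ => mlSol_ne_zero hu hp i
  refine Prod.ext rfl (funext fun j => ?_)
  exact (div_left_inj' hg).1 (congrFun h2 j)

lemma eval_sparsePoly {n : ℕ} (A : Finset (Fin n →₀ ℕ)) (c : (Fin n →₀ ℕ) → ℂ) (x : Fin n → ℂ) :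
    eval x (sparsePoly n A c) = ∑ α : A, c α * ∏ i, x i ^ (α : Fin n →₀ ℕ) i := by
  rw [sparsePoly, map_sum, ← Finset.sum_coe_sort A]
  refine Finset.sum_congr rfl fun α _ => ?_
  rw [eval_monomial, Finsupp.prod_fintype _ _ (by simp)]

lemma mul_eval_pderiv_sparsePoly {n : ℕ} (A : Finset (Fin n →₀ ℕ)) (c : (Fin n →₀ ℕ) → ℂ)
    (x : Fin n → ℂ) (i : Fin n) :
    x i * eval x (pderiv i (sparsePoly n A c)) =
      ∑ α : A, ((α : Fin n →₀ ℕ) i : ℂ) * c α * ∏ i, x i ^ (α : Fin n →₀ ℕ) i := by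
  have h : x i * eval x (pderiv i (sparsePoly n A c))
      = eval x (X i * pderiv i (sparsePoly n A c)) := by simp
  rw [h, sparsePoly, map_sum, Finset.mul_sum, map_sum, ← Finset.sum_coe_sort A]
  refine Finset.sum_congr rfl fun α _ => ?_
  rw [X_mul_pderiv_monomial, map_nsmul, eval_monomial, Finsupp.prod_fintype _ _ (by simp),
    nsmul_eq_mul, mul_assoc]

/-! ### The incidence variety and its parametrization -/

/-- The incidence variety of solutions, coefficients and data is parametrized by `x` in the torus,
the multipliers `λ`, and the coefficients `c_{j,α}` with `α` different from a chosen exponent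
`b_j ∈ A_j`: the equation `f_j(x) = 0` gives `c_{j,b_j}` and the remaining equations give `u`.
The unused coordinate `(j, b_j)` holds `λ_j`, so that source and target of the projection to
`(c, u)` have the same index type. -/
lemma exists_generic_finite (n k : ℕ) (A : Fin k → Finset (Fin n →₀ ℕ))
    (hA : ∀ j, (A j).Nonempty) :
    ∃ G : MvPolynomial ((Σ j, A j) ⊕ Fin n) ℂ, G ≠ 0 ∧
      ∀ (c : Fin k → (Fin n →₀ ℕ) → ℂ) (u : Fin n → ℂ), (∀ i, u i ≠ 0) →
        eval (Sum.elim (fun p : Σ j, A j => c p.1 p.2) u) G ≠ 0 →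
          (mlSol n k (fun j => sparsePoly n (A j) (c j)) u).Finite := by
  classical
  let b : ∀ j, A j := fun j => ⟨(hA j).choose, (hA j).choose_spec⟩
  let m : MvPolynomial ((Σ j, A j) ⊕ Fin n) ℂ := ∏ i, X (Sum.inr i)
  have hm : m ≠ 0 :=
    Finset.prod_ne_zero_iff.2 fun i _ => X_ne_zero (R := ℂ) (Sum.inr i : (Σ j, A j) ⊕ Fin n)
  let ξ : Fin n → Localization.Away m := fun i =>
    algebraMap (MvPolynomial ((Σ j, A j) ⊕ Fin n) ℂ) _ (X (Sum.inr i))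
  let t : (Σ j, A j) → Localization.Away m := fun p =>
    algebraMap (MvPolynomial ((Σ j, A j) ⊕ Fin n) ℂ) _ (X (Sum.inl p))
  have hv : ∀ i, ∃ v, ξ i * v = 1 := fun i =>
    (IsLocalization.Away.isUnit_of_dvd (S := Localization.Away m) m
      (Finset.dvd_prod_of_mem (fun i => (X (Sum.inr i) : MvPolynomial ((Σ j, A j) ⊕ Fin n) ℂ))
        (Finset.mem_univ i))).exists_right_inv
  choose v hv using hv
  let C' : (Σ j, A j) → Localization.Away m := fun p =>
    if p.2 = b p.1 then
      -(∏ i, v i ^ (p.2 : Fin n →₀ ℕ) i) *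
        ∑ β ∈ Finset.univ.erase p.2, t ⟨p.1, β⟩ * ∏ i, ξ i ^ (β : Fin n →₀ ℕ) i
    else t p
  let U : Fin n → Localization.Away m := fun i =>
    ∑ j, t ⟨j, b j⟩ * ∑ β : A j, ((β : Fin n →₀ ℕ) i : Localization.Away m) * C' ⟨j, β⟩ *
      ∏ i, ξ i ^ (β : Fin n →₀ ℕ) i
  obtain ⟨G, hG, hfin⟩ := generic_finite m hm (Sum.elim C' U)
    (Sum.elim ξ (fun j => t ⟨j, b j⟩))
  refine ⟨G, hG, fun c u hu hz => ?_⟩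
  refine ((hfin _ hz).image
    (fun w => (fun i => w (Sum.inl i), fun j => w (Sum.inr j)))).subset ?_
  rintro ⟨x, l⟩ hp
  have hx : ∀ i, x i ≠ 0 := mlSol_ne_zero hu hp
  obtain ⟨h1, h2⟩ := mem_mlSol.1 hp
  simp only [eval_sparsePoly] at h1 h2
  let s : (Σ j, A j) ⊕ Fin n → ℂ :=
    Sum.elim (fun p => if p.2 = b p.1 then l p.1 else c p.1 p.2) x
  have hunit : IsUnit ((aeval s : MvPolynomial _ ℂ →ₐ[ℂ] ℂ) m) := by
    simp only [m, map_prod, aeval_X, isUnit_iff_ne_zero, Finset.prod_ne_zero_iff]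
    exact fun i _ => hx i
  let e : Localization.Away m →ₐ[ℂ] ℂ := IsLocalization.Away.liftAlgHom m hunit
  have hemap : ∀ q, e (algebraMap _ _ q) = aeval s q := fun q =>
    IsLocalization.Away.lift_eq m hunit q
  have heξ : ∀ i, e (ξ i) = x i := fun i => by simp [ξ, hemap, s]
  have het : ∀ p : Σ j, A j, e (t p) = if p.2 = b p.1 then l p.1 else c p.1 p.2 := fun p => by
    simp [t, hemap, s]
  have hev : ∀ i, e (v i) = (x i)⁻¹ := fun i => by
    have := congrArg e (hv i)
    rw [map_mul, heξ, map_one] at this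
    exact eq_inv_of_mul_eq_one_right this
  have heC : ∀ p : Σ j, A j, e (C' p) = c p.1 p.2 := by
    rintro ⟨j, α⟩
    by_cases hα : α = b j
    · have hsum := h2 j
      rw [← Finset.add_sum_erase _ _ (Finset.mem_univ α)] at hsum
      have hrest : e (∑ β ∈ Finset.univ.erase α, t ⟨j, β⟩ * ∏ i, ξ i ^ (β : Fin n →₀ ℕ) i)
          = ∑ β ∈ Finset.univ.erase α, c j β * ∏ i, x i ^ (β : Fin n →₀ ℕ) i := by
        rw [map_sum]
        refine Finset.sum_congr rfl fun β hβ => ?_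
        have : β ≠ b j := hα ▸ Finset.ne_of_mem_erase hβ
        simp [het, heξ, this]
      have hmon : ∏ i, x i ^ (α : Fin n →₀ ℕ) i ≠ 0 :=
        Finset.prod_ne_zero_iff.2 fun i _ => pow_ne_zero _ (hx i)
      simp only [C', if_pos hα]
      rw [map_mul, hrest, eq_neg_of_add_eq_zero_right hsum]
      simp only [map_neg, map_prod, map_pow, hev, inv_pow, Finset.prod_inv_distrib]
      field_simp
    · simp [C', het, hα]
  refine ⟨Sum.elim x l, ⟨e, ?_, ?_⟩, rfl⟩
  · rintro (p | i)
    · exact heC p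
    · have hi := h1 i
      rw [Finset.mul_sum] at hi
      simp only [Sum.elim_inr, U, map_sum, map_mul, map_natCast, heC, het, heξ, map_prod, map_pow]
      refine Eq.trans ?_ hi.symm
      refine Finset.sum_congr rfl fun j _ => ?_
      rw [mul_left_comm, mul_eval_pderiv_sparsePoly]
      simp
  · rintro (i | j)
    · exact heξ i
    · simp [het]

/-- for fixed positive `n, k` and finite nonempty supports, there is a
nonzero polynomial `G` in the coefficients and data such that whenever `G(c,u) ≠ 0`,
the ML systems of `F` and of `F̂ = x_1⋯x_n · F` both have the same finite number of
solutions in `ℂ^{n+k}`. -/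
theorem statement5 (n k : ℕ) (hn : 0 < n) (hk : 0 < k)
    (A : Fin k → Finset (Fin n →₀ ℕ)) (hA : ∀ j, (A j).Nonempty) :
    ∃ G : MvPolynomial ((Fin k × (Fin n →₀ ℕ)) ⊕ Fin n) ℂ, G ≠ 0 ∧
      ∀ (c : Fin k → (Fin n →₀ ℕ) → ℂ) (u : Fin n → ℂ),
        eval (Sum.elim (fun p : Fin k × (Fin n →₀ ℕ) => c p.1 p.2) u) G ≠ 0 →
          (mlSol n k (fun j => sparsePoly n (A j) (c j)) u).Finite ∧
          (mlSol n k (fun j => (∏ i : Fin n, X i) * sparsePoly n (A j) (c j)) u).Finite ∧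
          (mlSol n k (fun j => sparsePoly n (A j) (c j)) u).ncard =
            (mlSol n k (fun j => (∏ i : Fin n, X i) * sparsePoly n (A j) (c j)) u).ncard := by
  obtain ⟨G, hG, hfin⟩ := exists_generic_finite n k A hA
  let φ : (Σ j, A j) ⊕ Fin n → (Fin k × (Fin n →₀ ℕ)) ⊕ Fin n :=
    Sum.map (fun p => (p.1, (p.2 : Fin n →₀ ℕ))) id
  have hφ : Function.Injective φ := by
    refine Function.Injective.sumMap ?_ Function.injective_id
    rintro ⟨j, α, hα⟩ ⟨j', α', hα'⟩ h
    obtain ⟨rfl, rfl⟩ := Prod.mk.inj h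
    rfl
  refine ⟨rename φ G * ∏ i, X (Sum.inr i), mul_ne_zero ?_ ?_, fun c u h => ?_⟩
  · exact (map_ne_zero_iff _ (rename_injective φ hφ)).2 hG
  · exact Finset.prod_ne_zero_iff.2 fun i _ => X_ne_zero _
  rw [map_mul, mul_ne_zero_iff, map_prod, Finset.prod_ne_zero_iff, eval_rename] at h
  obtain ⟨h1, h2⟩ := h
  have hu : ∀ i, u i ≠ 0 := fun i => by simpa using h2 i (Finset.mem_univ i)
  have hcomp : (Sum.elim (fun p : Fin k × (Fin n →₀ ℕ) => c p.1 p.2) u) ∘ φ =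
      Sum.elim (fun p : Σ j, A j => c p.1 p.2) u := by
    funext q
    rcases q with q | q <;> rfl
  rw [hcomp] at h1
  have hF := hfin c u hu h1
  rw [mlSol_hat _ hu]
  exact ⟨hF, hF.image _, (Set.InjOn.ncard_image (injOn_rescale _ hu)).symm⟩
end

section
/- Fix finite nonempty supports A_1,…,A_k ⊆ ℕ^n such that every α ∈ A_j has all coordinates ≥ 1 (so x_1⋯x_n divides each f_j). There exists a nonzero polynomial G in the coefficients c = (c_{j,α}) and the data u such that whenever G(c,u) ≠ 0, for every nonzero w = (a,b) ∈ ℤ^n × ℤ^k with min_{j∈[k]} (b_j + val_a(Newt(f_j))) = 0, the initial system init_w(L(F)) = (init_w(ℓ_1),…,init_w(ℓ_n), init_w(f_1),…,init_w(f_k)) has no solutions in (ℂ*)^{n+k}. -/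
/-!
Write `w = (a, b)` and let `T_j ⊆ A_j` be the exponents minimizing `⟨a, ·⟩`. For nonvanishing
coefficients and data, each `ℓ_i` has the exponent `0` (with coefficient `u_i`) and the exponents
`α + e_{λ_j}`, `α ∈ A_j`, of weight `⟨a, α⟩ + b_j`; here `α_i ≥ 1` is used. The normalization of
`w` makes all these weights nonnegative, so a torus zero `(x, λ)` of `init_w(L(F))` yields
multipliers `l` with

* `∑_{α ∈ T_j} c_{jα} x^α = 0` for all `j`,
* `u_i = ∑_j l_j ∑_{α ∈ T_j} α_i c_{jα} x^α` for all `i`,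

where `l_j = 0` as soon as all weights `⟨a, α⟩ + b_j`, `α ∈ A_j`, are positive
(`lagrange_of_initial`). Two cases remain.

If `a ≠ 0`, the system depends on `a` only through the tuple `(T_j)`, which takes finitely many
values; pick a nonzero representative `r` for each value (`exists_reps`). As `⟨r, ·⟩` is constant on
every `T_j`, Euler's relation gives `∑_i r_i u_i = 0` (`dot_eq_zero`): one of finitely many
hyperplanes.

If `a = 0`, then `T_j = A_j`, all `b_j ≥ 0`, and some `b_{j₀} > 0`, so `l_{j₀} = 0`. The set of
`(c, u)` admitting such a solution lies in the image of a polynomial map from an affine space of one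
dimension fewer: take as parameters `y = x⁻¹`, the values `t_{jα} = c_{jα} x^α` except for one
`α ∈ A_j` for each `j` (which is determined by `∑_α t_{jα} = 0`), and the `l_j` with `j ≠ j₀`. More
polynomials than variables are algebraically dependent, and the dependency is an equation
satisfied by `(c, u)` (`incidence_dep`).

The product of all these equations with all the `c_{jα}` and `u_i` is the required `G`.
-/



open MvPolynomial

/-! ### Evaluating initial forms -/

lemma eval_initw_sum {σ ι : Type*} [Fintype σ] (w : σ → ℤ) (S : Finset ι) (e : ι → σ →₀ ℕ)
    (m : ι → ℂ) (he : Set.InjOn e S) (hm : ∀ s ∈ S, m s ≠ 0) (p : σ → ℂ) :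
    eval p (initw w (∑ s ∈ S, monomial (e s) (m s))) =
      ∑ s ∈ S with ∀ s' ∈ S, ∑ i, w i * (e s i : ℤ) ≤ ∑ i, w i * (e s' i : ℤ),
        m s * ∏ i, p i ^ e s i := by
  classical
  have hc : ∀ s ∈ S, coeff (e s) (∑ s ∈ S, monomial (e s) (m s)) = m s := by
    intro s hs
    rw [coeff_sum, Finset.sum_eq_single_of_mem s hs]
    · simp
    · intro t ht hts
      rw [coeff_monomial, if_neg fun h => hts (he ht hs h)]
  have hsupp : (∑ s ∈ S, monomial (e s) (m s)).support = S.image e := by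
    ext d
    rw [mem_support_iff, Finset.mem_image]
    constructor
    · intro h
      by_contra! hd
      refine h ?_
      rw [coeff_sum]
      refine Finset.sum_eq_zero fun s hs => ?_
      rw [coeff_monomial, if_neg (hd s hs)]
    · rintro ⟨s, hs, rfl⟩
      rw [hc s hs]
      exact hm s hs
  unfold initw
  rw [hsupp, map_sum, Finset.filter_image, Finset.sum_image (he.mono (Finset.coe_subset.mpr (Finset.filter_subset _ _)))]
  simp only [Finset.forall_mem_image]
  refine Finset.sum_congr rfl fun s hs => ?_
  rw [hc s (Finset.mem_filter.mp hs).1, eval_monomial, Finsupp.prod_fintype _ _ (by simp)]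

/-- The exponents of `A` on which the weight `⟨a, ·⟩` is minimal. -/
noncomputable def faceSupp {n : ℕ} (a : Fin n → ℤ) (A : Finset (Fin n →₀ ℕ)) :
    Finset (Fin n →₀ ℕ) :=
  {α ∈ A | ∀ β ∈ A, ∑ i, a i * (α i : ℤ) ≤ ∑ i, a i * (β i : ℤ)}

/-- The exponent vector of the monomial `λ_j x^α`. -/
noncomputable def lagExp {n k : ℕ} (j : Fin k) (α : Fin n →₀ ℕ) : Fin n ⊕ Fin k →₀ ℕ :=
  Finsupp.mapDomain Sum.inl α + Finsupp.single (Sum.inr j) 1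

lemma mapDomain_inl_inl {n k : ℕ} (α : Fin n →₀ ℕ) (i : Fin n) :
    Finsupp.mapDomain (Sum.inl : Fin n → Fin n ⊕ Fin k) α (Sum.inl i) = α i :=
  Finsupp.mapDomain_apply Sum.inl_injective α i

lemma mapDomain_inl_inr {n k : ℕ} (α : Fin n →₀ ℕ) (j : Fin k) :
    Finsupp.mapDomain (Sum.inl : Fin n → Fin n ⊕ Fin k) α (Sum.inr j) = 0 :=
  Finsupp.mapDomain_of_notMem_range α _ (by simp)

lemma lagExp_inl {n k : ℕ} (j : Fin k) (α : Fin n →₀ ℕ) (i : Fin n) :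
    lagExp j α (Sum.inl i) = α i := by
  simp [lagExp, mapDomain_inl_inl]

lemma lagExp_inr {n k : ℕ} (j : Fin k) (α : Fin n →₀ ℕ) (j' : Fin k) :
    lagExp j α (Sum.inr j') = if j = j' then 1 else 0 := by
  simp [lagExp, mapDomain_inl_inr, Finsupp.single_apply]

lemma eval_initw_sparse {n k : ℕ} (A : Finset (Fin n →₀ ℕ)) (c : (Fin n →₀ ℕ) → ℂ)
    (hc : ∀ α ∈ A, c α ≠ 0) (a : Fin n → ℤ) (b : Fin k → ℤ) (p : Fin n ⊕ Fin k → ℂ) :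
    eval p (initw (Sum.elim a b) (rename Sum.inl (sparsePoly n A c))) =
      ∑ α ∈ faceSupp a A, c α * ∏ i, p (Sum.inl i) ^ α i := by
  have h : rename (Sum.inl : Fin n → Fin n ⊕ Fin k) (sparsePoly n A c) =
      ∑ α ∈ A, monomial (Finsupp.mapDomain Sum.inl α) (c α) := by
    simp [sparsePoly, rename_monomial]
  rw [h, eval_initw_sum _ _ _ _ (Finsupp.mapDomain_injective Sum.inl_injective).injOn hc]
  simp [mapDomain_inl_inl, mapDomain_inl_inr, faceSupp]

/-- The expansion of `ℓ_i` into monomials with pairwise distinct exponents: `none` indexes the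
constant term `u_i`, and `(j, α)` indexes the term `-α_i c_{jα} λ_j x^α`. -/
lemma mlEll_sparse {n k : ℕ} (A : Fin k → Finset (Fin n →₀ ℕ))
    (hA1 : ∀ j, ∀ α ∈ A j, ∀ i, 1 ≤ α i) (c : Fin k → (Fin n →₀ ℕ) → ℂ) (u : Fin n → ℂ)
    (i : Fin n) :
    mlEll n k (fun j => sparsePoly n (A j) (c j)) u i =
      ∑ s : Option (Σ j, {α // α ∈ A j}),
        monomial (s.elim 0 fun q => lagExp q.1 q.2.1)
          (s.elim (u i) fun q => -((q.2.1 i : ℂ) * c q.1 q.2.1)) := by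
  rw [Fintype.sum_option, Fintype.sum_sigma, mlEll, sub_eq_add_neg, Finset.mul_sum,
    ← Finset.sum_neg_distrib]
  congr 1
  refine Finset.sum_congr rfl fun j _ => ?_
  simp only [Option.elim]
  rw [Finset.sum_coe_sort (A j) fun α => monomial (lagExp j α) (-((α i : ℂ) * c j α))]
  simp only [sparsePoly, map_sum, Finset.mul_sum, ← Finset.sum_neg_distrib, pderiv_monomial,
    rename_monomial]
  refine Finset.sum_congr rfl fun α hα => ?_
  have h1 : lagExp j α = Finsupp.single (Sum.inl i) 1 + (Finsupp.single (Sum.inr j) 1 +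
      Finsupp.mapDomain Sum.inl (α - Finsupp.single i 1)) := by
    have h2 : Finsupp.single i 1 + (α - Finsupp.single i 1) = α :=
      add_tsub_cancel_of_le (by simpa using hA1 j α hα i)
    conv_lhs => rw [lagExp, ← h2, Finsupp.mapDomain_add, Finsupp.mapDomain_single]
    abel
  rw [X, X, monomial_mul, monomial_mul, h1, ← map_neg]
  congr 1
  ring

/-- When all exponents of `ℓ_i` have nonnegative weight, `init_w(ℓ_i)` consists of the constant
term and the terms of weight zero. -/
lemma eval_initw_mlEll {n k : ℕ} (A : Fin k → Finset (Fin n →₀ ℕ))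
    (hA1 : ∀ j, ∀ α ∈ A j, ∀ i, 1 ≤ α i) (c : Fin k → (Fin n →₀ ℕ) → ℂ) (u : Fin n → ℂ)
    (hc : ∀ j, ∀ α ∈ A j, c j α ≠ 0) (i : Fin n) (hu : u i ≠ 0)
    (a : Fin n → ℤ) (b : Fin k → ℤ) (hab : ∀ j, ∀ α ∈ A j, 0 ≤ b j + ∑ i, a i * (α i : ℤ))
    (p : Fin n ⊕ Fin k → ℂ) :
    eval p (initw (Sum.elim a b) (mlEll n k (fun j => sparsePoly n (A j) (c j)) u i)) =
      u i - ∑ j, p (Sum.inr j) * ∑ α ∈ A j with b j + ∑ i, a i * (α i : ℤ) = 0,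
        (α i : ℂ) * (c j α * ∏ i, p (Sum.inl i) ^ α i) := by
  classical
  have hwt : ∀ (j : Fin k) (α : Fin n →₀ ℕ),
      ∑ z, Sum.elim a b z * (lagExp j α z : ℤ) = b j + ∑ i, a i * (α i : ℤ) := by
    intro j α
    simp [lagExp_inl, lagExp_inr, add_comm]
  have hmon : ∀ (j : Fin k) (α : Fin n →₀ ℕ),
      ∏ z, p z ^ lagExp j α z = p (Sum.inr j) * ∏ i, p (Sum.inl i) ^ α i := by
    intro j α
    simp [lagExp_inl, lagExp_inr, mul_comm]
  rw [mlEll_sparse A hA1, eval_initw_sum]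
  · rw [Finset.sum_filter, Fintype.sum_option, Fintype.sum_sigma, sub_eq_add_neg,
      ← Finset.sum_neg_distrib]
    congr 1
    · rw [if_pos]
      · simp
      · rintro (_ | ⟨j, α, hα⟩) -
        · exact le_rfl
        · simpa [hwt] using hab j α hα
    · refine Finset.sum_congr rfl fun j _ => ?_
      rw [Finset.mul_sum, ← Finset.sum_neg_distrib, Finset.sum_filter, ← Finset.sum_coe_sort (A j)]
      refine Finset.sum_congr rfl fun α _ => ?_
      simp only [Option.elim, hwt, hmon]
      refine if_congr ⟨fun h => ?_, fun h => ?_⟩ (by ring) rfl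
      · have := h none (Finset.mem_univ _)
        simp only [Finsupp.coe_zero, Pi.zero_apply, Nat.cast_zero, mul_zero,
          Finset.sum_const_zero] at this
        exact le_antisymm this (hab j α.1 α.2)
      · rintro (_ | ⟨j', β, hβ⟩) -
        · simp [h]
        · simpa [hwt, h] using hab j' β hβ
  · rintro (_ | ⟨j, α, hα⟩) - (_ | ⟨j', β, hβ⟩) - h
    · rfl
    · have := DFunLike.congr_fun h (Sum.inr j')
      simp [lagExp_inr] at this
    · have := DFunLike.congr_fun h (Sum.inr j)
      simp [lagExp_inr] at this
    · have h1 := DFunLike.congr_fun h (Sum.inr j)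
      simp [lagExp_inr] at h1
      subst h1
      have h2 : α = β := by
        ext i
        simpa [lagExp_inl] using DFunLike.congr_fun h (Sum.inl i)
      subst h2
      rfl
  · rintro (_ | ⟨j, α, hα⟩) -
    · exact hu
    · have := hA1 j α hα i
      exact neg_ne_zero.mpr (mul_ne_zero (by simp; omega) (hc j α hα))

lemma valOf_newt_le {n : ℕ} (a : Fin n → ℤ) (A : Finset (Fin n →₀ ℕ)) (c : (Fin n →₀ ℕ) → ℂ)
    {α : Fin n →₀ ℕ} (hα : α ∈ A) (hc : c α ≠ 0) :
    valOf a (newt (sparsePoly n A c)) ≤ ((∑ i, a i * (α i : ℤ) : ℤ) : ℝ) := by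
  classical
  have hcont : Continuous (wdot a) := by unfold wdot; fun_prop
  have hcomp : IsCompact (newt (sparsePoly n A c)) :=
    ((Finset.finite_toSet _).image _).isCompact_convexHull ℝ
  refine csInf_le (hcomp.image hcont).bddBelow ⟨fun i => (α i : ℝ), ?_, ?_⟩
  · refine subset_convexHull ℝ _ ⟨α, ?_, rfl⟩
    simp [sparsePoly, coeff_sum, coeff_monomial, hα, hc]
  · simp [wdot]

lemma faceSupp_zero {n : ℕ} (A : Finset (Fin n →₀ ℕ)) : faceSupp 0 A = A := by
  simp [faceSupp]

/-- The first half of a torus zero of `init_w(L(F))`, rewritten so that `b` only enters through the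
vanishing of some multipliers: the terms `λ_j x^α` of weight zero are either absent, in which case
`l_j` is taken to be `0`, or are exactly those with `α` on the face of `A_j` exposed by `a`. -/
lemma lagrange_of_initial {n k : ℕ} (A : Fin k → Finset (Fin n →₀ ℕ))
    (hA1 : ∀ j, ∀ α ∈ A j, ∀ i, 1 ≤ α i) (c : Fin k → (Fin n →₀ ℕ) → ℂ) (u : Fin n → ℂ)
    (hc : ∀ j, ∀ α ∈ A j, c j α ≠ 0) (hu : ∀ i, u i ≠ 0)
    (a : Fin n → ℤ) (b : Fin k → ℤ) (hab : ∀ j, ∀ α ∈ A j, 0 ≤ b j + ∑ i, a i * (α i : ℤ))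
    (p : Fin n ⊕ Fin k → ℂ)
    (hl : ∀ i, eval p (initw (Sum.elim a b)
      (mlEll n k (fun j => sparsePoly n (A j) (c j)) u i)) = 0) :
    ∃ l : Fin k → ℂ, (∀ j, (∀ α ∈ A j, 0 < b j + ∑ i, a i * (α i : ℤ)) → l j = 0) ∧
      ∀ i, u i = ∑ j, l j * ∑ α ∈ faceSupp a (A j),
        (α i : ℂ) * (c j α * ∏ i, p (Sum.inl i) ^ α i) := by
  classical
  refine ⟨fun j => if ∀ α ∈ A j, 0 < b j + ∑ i, a i * (α i : ℤ) then 0 else p (Sum.inr j),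
    fun j hj => if_pos hj, fun i => ?_⟩
  have h := hl i
  rw [eval_initw_mlEll A hA1 c u hc i (hu i) a b hab, sub_eq_zero] at h
  rw [h]
  refine Finset.sum_congr rfl fun j _ => ?_
  beta_reduce
  by_cases hj : ∀ α ∈ A j, 0 < b j + ∑ i, a i * (α i : ℤ)
  · rw [if_pos hj, zero_mul, Finset.filter_false_of_mem fun α hα => (hj α hα).ne']
    simp
  · rw [if_neg hj]
    push Not at hj
    obtain ⟨β, hβ, hβ0⟩ := hj
    congr 2
    ext α
    simp only [faceSupp, Finset.mem_filter]
    refine and_congr_right fun hα => ⟨fun h γ hγ => ?_, fun h => ?_⟩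
    · have := hab j γ hγ
      omega
    · have := hab j α hα
      have := h β hβ
      omega
/-! ### Algebraic dependence and the case of weight zero on the variables -/

/-- More polynomials than variables are algebraically dependent. -/
lemma exists_dep {ι σ : Type} [Fintype ι] [Fintype σ] (h : Fintype.card σ < Fintype.card ι)
    (φ : ι → MvPolynomial σ ℂ) : ∃ G : MvPolynomial ι ℂ, G ≠ 0 ∧ aeval φ G = 0 := by
  by_contra! H
  have hind : AlgebraicIndependent ℂ φ := by
    rw [algebraicIndependent_iff]
    intro p hp
    by_contra hne
    exact H p hne hp
  have := hind.lift_cardinalMk_le_trdeg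
  rw [MvPolynomial.trdeg_of_isDomain] at this
  simp at this
  omega

/-- The critical-point equations with `l_{j₀} = 0` impose a nontrivial equation on `(c, u)`. -/
lemma incidence_dep (n k : ℕ) (A : Fin k → Finset (Fin n →₀ ℕ)) (hA : ∀ j, (A j).Nonempty)
    (j₀ : Fin k) :
    ∃ G : MvPolynomial ((Fin k × (Fin n →₀ ℕ)) ⊕ Fin n) ℂ, G ≠ 0 ∧
      ∀ (c : Fin k → (Fin n →₀ ℕ) → ℂ) (u x : Fin n → ℂ) (l : Fin k → ℂ), (∀ i, x i ≠ 0) →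
        l j₀ = 0 → (∀ j, ∑ α ∈ A j, c j α * ∏ i, x i ^ α i = 0) →
        (∀ i, u i = ∑ j, l j * ∑ α ∈ A j, (α i : ℂ) * (c j α * ∏ i, x i ^ α i)) →
        eval (Sum.elim (fun p : Fin k × (Fin n →₀ ℕ) => c p.1 p.2) u) G = 0 := by
  classical
  choose piv hpiv using hA
  -- Both the parameters and the target coordinates `(c, u)` are indexed by `ι`; the parameter slot
  -- of the pivot of `A j` holds `l j`, so the slot `z₀` belonging to `l j₀ = 0` can be dropped.
  let ι := (Σ j, {α // α ∈ A j}) ⊕ Fin n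
  let pv : (j : Fin k) → {α // α ∈ A j} := fun j => ⟨piv j, hpiv j⟩
  let z₀ : ι := Sum.inl ⟨j₀, pv j₀⟩
  let S : ι → MvPolynomial {z : ι // z ≠ z₀} ℂ := fun z => if h : z ≠ z₀ then X ⟨z, h⟩ else 0
  let t : (j : Fin k) → {α // α ∈ A j} → MvPolynomial {z : ι // z ≠ z₀} ℂ := fun j α =>
    if α = pv j then - ∑ β ∈ Finset.univ.erase (pv j), S (Sum.inl ⟨j, β⟩) else S (Sum.inl ⟨j, α⟩)
  let φ : ι → MvPolynomial {z : ι // z ≠ z₀} ℂ := Sum.elim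
    (fun p => t p.1 p.2 * ∏ i, S (Sum.inr i) ^ p.2.1 i)
    (fun i => ∑ j, S (Sum.inl ⟨j, pv j⟩) * ∑ α : {α // α ∈ A j}, C (α.1 i : ℂ) * t j α)
  obtain ⟨G, hG, hφ⟩ := exists_dep (Fintype.card_subtype_lt (x := z₀) (by simp)) φ
  let e : ι → (Fin k × (Fin n →₀ ℕ)) ⊕ Fin n := Sum.map (fun p => (p.1, p.2.1)) id
  have he : Function.Injective e := by
    refine Sum.map_injective.mpr ⟨?_, Function.injective_id⟩
    rintro ⟨j, α, hα⟩ ⟨j', α', hα'⟩ h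
    simp only [Prod.mk.injEq] at h
    obtain ⟨rfl, rfl⟩ := h
    rfl
  refine ⟨rename e G, fun h => hG (rename_injective e he (by simpa using h)), ?_⟩
  intro c u x l hx hl hf hu
  -- The parameter values of the given solution.
  let q : ι → ℂ := Sum.elim
    (fun p => if p.2 = pv p.1 then l p.1 else c p.1 p.2.1 * ∏ i, x i ^ p.2.1 i)
    (fun i => (x i)⁻¹)
  have hq₀ : q z₀ = 0 := by simp [q, z₀, hl]
  have hS : ∀ z, eval (fun z => q z.1) (S z) = q z := by
    intro z
    by_cases h : z = z₀
    · simp [S, h, hq₀]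
    · simp [S, h]
  have ht : ∀ j α, eval (fun z => q z.1) (t j α) = c j α.1 * ∏ i, x i ^ α.1 i := by
    intro j α
    by_cases h : α = pv j
    · have h1 := hf j
      rw [← Finset.sum_coe_sort, ← Finset.add_sum_erase _ _ (Finset.mem_univ (pv j))] at h1
      simp only [t, h, if_true, map_neg, map_sum, hS]
      rw [eq_comm, ← add_eq_zero_iff_eq_neg, ← h1]
      congr 1
      refine Finset.sum_congr rfl fun β hβ => ?_
      simp [q, (Finset.mem_erase.mp hβ).1]
    · simp [t, h, hS, q]
  have hpt : (Sum.elim (fun p : Fin k × (Fin n →₀ ℕ) => c p.1 p.2) u) ∘ e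
      = fun z => eval (fun z => q z.1) (φ z) := by
    funext z
    rcases z with ⟨j, α⟩ | i
    · simp only [Function.comp, e, Sum.map_inl, Sum.elim_inl, φ, map_mul, map_prod, map_pow, ht, hS]
      rw [mul_assoc, ← Finset.prod_mul_distrib]
      simp [q, hx]
    · simp only [Function.comp, e, Sum.map_inr, Sum.elim_inr, φ, map_mul, map_sum, ht, hS, id, hu i,
        eval_C]
      refine Finset.sum_congr rfl fun j _ => ?_
      rw [← Finset.sum_coe_sort (A j)]
      simp [q]
  rw [eval_rename, hpt]
  have := congrArg (eval fun z : {z : ι // z ≠ z₀} => q z.1) hφ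
  rw [map_zero] at this
  rw [← this]
  simp only [aeval_def, ← MvPolynomial.coe_aeval_eq_eval]
  simp only [RingHom.coe_coe]
  rw [← aeval_def, ← comp_aeval_apply]

/-! ### Nonzero weights on the variables -/

/-- Finitely many nonzero weights represent all values, on nonzero weights, of a function `T` that
selects subsets of the supports. -/
lemma exists_reps {n k : ℕ} (A : Fin k → Finset (Fin n →₀ ℕ))
    (T : (Fin n → ℤ) → Fin k → Finset (Fin n →₀ ℕ)) (hT : ∀ a j, T a j ⊆ A j) :
    ∃ R : Finset (Fin n → ℤ), (∀ r ∈ R, r ≠ 0) ∧ ∀ a, a ≠ 0 → ∃ r ∈ R, T r = T a := by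
  classical
  have hfin : (T '' {a | a ≠ 0}).Finite := by
    refine (Fintype.piFinset fun j => (A j).powerset).finite_toSet.subset ?_
    rintro _ ⟨a, -, rfl⟩
    simpa using hT a
  obtain ⟨R, hR, hRT⟩ := Finset.subset_set_image_iff.mp
    (show (hfin.toFinset : Set _) ⊆ T '' {a | a ≠ 0} by simp)
  refine ⟨R, fun r hr => hR hr, fun a ha => ?_⟩
  have : T a ∈ R.image T := by rw [hRT]; simpa using ⟨a, ha, rfl⟩
  simpa using this

/-- Euler's relation: if each `f_j = ∑_α t_{jα}` is quasi-homogeneous of degree `v_j` for the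
weight `r`, then `∑_i r_i x_i ∂f_j/∂x_i = v_j f_j`, which vanishes where `f_j` does. -/
lemma dot_eq_zero {n k : ℕ} (T : Fin k → Finset (Fin n →₀ ℕ)) (r : Fin n → ℤ) (v : Fin k → ℤ)
    (hr : ∀ j, ∀ α ∈ T j, ∑ i, r i * (α i : ℤ) = v j) (t : Fin k → (Fin n →₀ ℕ) → ℂ)
    (ht : ∀ j, ∑ α ∈ T j, t j α = 0) (l : Fin k → ℂ) (u : Fin n → ℂ)
    (hu : ∀ i, u i = ∑ j, l j * ∑ α ∈ T j, (α i : ℂ) * t j α) :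
    ∑ i, (r i : ℂ) * u i = 0 := by
  simp only [hu, Finset.mul_sum]
  rw [Finset.sum_comm]
  refine Finset.sum_eq_zero fun j _ => ?_
  rw [Finset.sum_comm]
  have : ∀ α ∈ T j, ∑ i, (r i : ℂ) * (l j * ((α i : ℂ) * t j α)) = l j * v j * t j α := by
    intro α hα
    rw [← hr j α hα]
    push_cast
    simp only [Finset.sum_mul, Finset.mul_sum]
    exact Finset.sum_congr rfl fun i _ => by ring
  rw [Finset.sum_congr rfl this, ← Finset.mul_sum, ht, mul_zero]

lemma dotPoly_ne_zero {n : ℕ} {τ : Type*} {r : Fin n → ℤ} (hr : r ≠ 0) :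
    (∑ i, C (r i : ℂ) * X (Sum.inr i) : MvPolynomial (τ ⊕ Fin n) ℂ) ≠ 0 := by
  intro h
  refine hr (funext fun i => ?_)
  have := congrArg (eval (Sum.elim 0 (Pi.single i 1))) h
  simpa [Pi.single_apply] using this

/-! ### The generic condition -/

/-- for finite nonempty supports all of whose exponents have every
coordinate `≥ 1`, there is a nonzero polynomial `G` in the coefficients and data such
that whenever `G(c,u) ≠ 0`, for every nonzero `w = (a,b)` with
`min_j (b_j + val_a(Newt(f_j))) = 0`, the initial system `init_w(L(F))` has no
solutions in `(ℂ*)^{n+k}`. -/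
theorem statement11 (n k : ℕ) (hk : 0 < k)
    (A : Fin k → Finset (Fin n →₀ ℕ)) (hA : ∀ j, (A j).Nonempty)
    (hA1 : ∀ j, ∀ α ∈ A j, ∀ i, 1 ≤ α i) :
    ∃ G : MvPolynomial ((Fin k × (Fin n →₀ ℕ)) ⊕ Fin n) ℂ, G ≠ 0 ∧
      ∀ (c : Fin k → (Fin n →₀ ℕ) → ℂ) (u : Fin n → ℂ),
        eval (Sum.elim (fun p : Fin k × (Fin n →₀ ℕ) => c p.1 p.2) u) G ≠ 0 →
          ∀ (a : Fin n → ℤ) (b : Fin k → ℤ), Sum.elim a b ≠ 0 →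
            Finset.univ.inf'
                (Finset.univ_nonempty_iff.mpr (Fin.pos_iff_nonempty.mp hk))
                (fun j => (b j : ℝ) + valOf a (newt (sparsePoly n (A j) (c j)))) = 0 →
            ¬ ∃ p : Fin n ⊕ Fin k → ℂ, (∀ i, p i ≠ 0) ∧
                (∀ i, eval p (initw (Sum.elim a b)
                  (mlEll n k (fun j => sparsePoly n (A j) (c j)) u i)) = 0) ∧
                (∀ j, eval p (initw (Sum.elim a b)
                  (rename Sum.inl (sparsePoly n (A j) (c j)))) = 0) := by
  classical
  choose Gin hGin hGin' using incidence_dep n k A hA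
  obtain ⟨R, hR0, hR⟩ := exists_reps A (fun a j => faceSupp a (A j))
    (fun a j => Finset.filter_subset _ _)
  refine ⟨(∏ j, ∏ α ∈ A j, X (Sum.inl (j, α))) * (∏ i, X (Sum.inr i)) * (∏ j, Gin j) *
    ∏ r ∈ R, ∑ i, C (r i : ℂ) * X (Sum.inr i), ?_, ?_⟩
  · refine mul_ne_zero (mul_ne_zero (mul_ne_zero ?_ ?_) ?_) ?_
    · exact Finset.prod_ne_zero_iff.mpr fun j _ => Finset.prod_ne_zero_iff.mpr fun α _ => X_ne_zero _
    · exact Finset.prod_ne_zero_iff.mpr fun i _ => X_ne_zero _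
    · exact Finset.prod_ne_zero_iff.mpr fun j _ => hGin j
    · exact Finset.prod_ne_zero_iff.mpr fun r hr => dotPoly_ne_zero (hR0 r hr)
  rintro c u hG a b hw hmin ⟨p, hp, hpl, hpf⟩
  simp only [map_mul, map_prod, map_sum, eval_X, eval_C, Sum.elim_inl, Sum.elim_inr, mul_ne_zero_iff,
    Finset.prod_ne_zero_iff, Finset.mem_univ, true_implies] at hG
  obtain ⟨⟨⟨hc, hu⟩, hGj⟩, hdot⟩ := hG
  have hab : ∀ j, ∀ α ∈ A j, 0 ≤ b j + ∑ i, a i * (α i : ℤ) := by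
    intro j α hα
    have h1 := hmin.ge.trans (Finset.inf'_le _ (Finset.mem_univ j))
    have h2 := valOf_newt_le a (A j) (c j) hα (hc j α hα)
    have h3 : (0 : ℝ) ≤ ((b j + ∑ i, a i * (α i : ℤ) : ℤ) : ℝ) := by
      rw [Int.cast_add]
      linarith
    exact_mod_cast h3
  simp only [eval_initw_sparse _ _ (hc _)] at hpf
  obtain ⟨l, hl0, hl⟩ := lagrange_of_initial A hA1 c u hc hu a b hab p hpl
  by_cases ha : a = 0
  · subst ha
    have hb : ∃ j, b j ≠ 0 := by
      by_contra! hb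
      exact hw (by ext (i | j) <;> simp [hb])
    obtain ⟨j₀, hj₀⟩ := hb
    simp only [faceSupp_zero] at hpf hl
    refine hGj j₀ (hGin' j₀ c u (fun i => p (Sum.inl i)) l (fun i => hp _) (hl0 j₀ fun α hα => ?_)
      hpf hl)
    have := hab j₀ α hα
    simp only [Pi.zero_apply, zero_mul, Finset.sum_const_zero, add_zero] at this ⊢
    omega
  · obtain ⟨r, hr, hrT⟩ := hR a ha
    have hrT' : ∀ j, faceSupp r (A j) = faceSupp a (A j) := fun j => congrFun hrT j
    have hconst : ∀ j, ∃ v, ∀ α ∈ faceSupp r (A j), ∑ i, r i * (α i : ℤ) = v := by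
      intro j
      rcases (faceSupp r (A j)).eq_empty_or_nonempty with h | ⟨β, hβ⟩
      · exact ⟨0, by simp [h]⟩
      · refine ⟨∑ i, r i * (β i : ℤ), fun α hα => le_antisymm ?_ ?_⟩
        · exact (Finset.mem_filter.mp hα).2 β (Finset.mem_filter.mp hβ).1
        · exact (Finset.mem_filter.mp hβ).2 α (Finset.mem_filter.mp hα).1
    choose v hv using hconst
    simp only [← hrT'] at hpf hl
    exact hdot r hr (dot_eq_zero _ r v hv _ hpf l u hl)
end
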